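/- There is a universal constant C ∈ (0,∞) such that for every p ∈ [1,∞), every t ∈ (0,∞), every Banach space (X,‖·‖_X), and every smooth compactly supported f : ℍ(ℝ) → X, ‖Q_t * f − Q_{2t} * f‖_{L_p(ℍ(ℝ),X)} ≤ C √t · ‖Q_t * ∇_ℍ f‖_{L_p(ℍ(ℝ),ℓ_p²(X))}. -/

import Mathlib

open MeasureTheory

/-- The real Heisenberg group `ℍ(ℝ)`, identified with `ℝ³`; the Lebesgue measure
(`volume`) is a Haar measure for the Heisenberg group structure. -/
abbrev HR : Type := ℝ × ℝ × ℝ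

namespace HR

/-- Right translation by the central element `c^t`: `h ↦ h·c^t`. -/
def vmul (t : ℝ) (h : HR) : HR := (h.1, h.2.1, h.2.2 + t)

/-- The Poisson kernel `P_t(u) = t/(π(t²+u²))` on `ℝ`. -/
noncomputable def Pker (t u : ℝ) : ℝ := t / (Real.pi * (t ^ 2 + u ^ 2))

/-- `Q_t(u) = ∂P_t/∂t(u) = (u²−t²)/(π(t²+u²)²)`. -/
noncomputable def Qker (t u : ℝ) : ℝ := (u ^ 2 - t ^ 2) / (Real.pi * (t ^ 2 + u ^ 2) ^ 2)

variable {X : Type*} [NormedAddCommGroup X] [NormedSpace ℝ X]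

/-- Convolution of a kernel `ψ : ℝ → ℝ` with `g : ℍ(ℝ) → X` along the center:
`(ψ*g)(x,y,z) = ∫_ℝ ψ(u) g(x,y,z−u) du`. -/
noncomputable def conv (ψ : ℝ → ℝ) (g : HR → X) (h : HR) : X :=
  ∫ u : ℝ, ψ u • g (h.1, h.2.1, h.2.2 - u)

/-- The left-invariant horizontal derivative `∂_a f = ∂f/∂x`. -/
noncomputable def da (f : HR → X) (h : HR) : X := fderiv ℝ f h (1, 0, 0)

/-- The left-invariant horizontal derivative `∂_b f = ∂f/∂y + x·∂f/∂z`. -/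
noncomputable def db (f : HR → X) (h : HR) : X :=
  fderiv ℝ f h (0, 1, 0) + h.1 • fderiv ℝ f h (0, 0, 1)

end HR

open Filter Topology

namespace HR

lemma Pker_nonneg {t : ℝ} (ht : 0 < t) (u : ℝ) : 0 ≤ Pker t u := by
  unfold Pker; positivity

lemma continuous_Pker {t : ℝ} (ht : 0 < t) : Continuous (Pker t) := by
  unfold Pker
  refine continuous_const.div (by fun_prop) fun u => ?_
  positivity

lemma continuous_Qker {t : ℝ} (ht : 0 < t) : Continuous (Qker t) := by
  unfold Qker
  refine Continuous.div (by fun_prop) (by fun_prop) fun u => ?_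
  positivity

lemma Pker_comp_mul {t : ℝ} (ht : 0 < t) (u : ℝ) : Pker t (t * u) = t⁻¹ * Pker 1 u := by
  unfold Pker
  have : 1 + u ^ 2 ≠ 0 := by positivity
  have : t ^ 2 + (t * u) ^ 2 ≠ 0 := by positivity
  have := Real.pi_pos
  field_simp

lemma Pker_one_eq (u : ℝ) : Pker 1 u = Real.pi⁻¹ * (1 + u ^ 2)⁻¹ := by
  unfold Pker
  rw [one_pow, one_div, mul_inv]

lemma Pker_eq_comp_div {t : ℝ} (ht : 0 < t) (u : ℝ) : Pker t u = t⁻¹ * Pker 1 (u / t) := by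
  rw [← Pker_comp_mul ht, mul_div_cancel₀ _ ht.ne']

lemma integrable_Pker {t : ℝ} (ht : 0 < t) : Integrable (Pker t) := by
  have h : Integrable (Pker 1) := by
    simpa only [funext Pker_one_eq] using integrable_inv_one_add_sq.const_mul Real.pi⁻¹
  rw [funext (Pker_eq_comp_div ht)]
  exact (h.comp_div ht.ne').const_mul _

lemma integral_Pker {t : ℝ} (ht : 0 < t) : ∫ u, Pker t u = 1 := by
  rw [funext (Pker_eq_comp_div ht), integral_const_mul, Measure.integral_comp_div (Pker 1),
    funext Pker_one_eq, integral_const_mul, integral_univ_inv_one_add_sq, abs_of_pos ht,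
    smul_eq_mul, inv_mul_cancel₀ Real.pi_ne_zero, mul_one, inv_mul_cancel₀ ht.ne']

lemma Pker_le {t : ℝ} (ht : 0 < t) (u : ℝ) : Pker t u ≤ (Real.pi * t)⁻¹ := by
  unfold Pker
  have := Real.pi_pos
  rw [div_le_iff₀ (by positivity), inv_mul_eq_div, le_div_iff₀ (by positivity)]
  nlinarith [mul_nonneg this.le (sq_nonneg u)]

lemma abs_Qker_le {t : ℝ} (ht : 0 < t) (u : ℝ) : |Qker t u| ≤ t⁻¹ * Pker t u := by
  unfold Qker Pker
  have := Real.pi_pos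
  have hU : 0 < t ^ 2 + u ^ 2 := by positivity
  rw [abs_div, abs_of_pos (a := Real.pi * _) (by positivity)]
  have h : |u ^ 2 - t ^ 2| ≤ t ^ 2 + u ^ 2 := abs_le.2 ⟨by nlinarith, by nlinarith⟩
  calc _ ≤ (t ^ 2 + u ^ 2) / (Real.pi * (t ^ 2 + u ^ 2) ^ 2) := by gcongr
    _ = _ := by field_simp

lemma integrable_Qker {t : ℝ} (ht : 0 < t) : Integrable (Qker t) :=
  ((integrable_Pker ht).const_mul t⁻¹).mono' (continuous_Qker ht).aestronglyMeasurable
    (.of_forall fun u => abs_Qker_le ht u)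

lemma Qker_neg (t u : ℝ) : Qker t (-u) = Qker t u := by
  simp [Qker]

lemma integrable_Pker_one_mul_sqrt : Integrable fun u : ℝ => Pker 1 u * √|u| := by
  have h := (integrable_one_add_norm (E := ℝ) (μ := volume) (r := 3 / 2)
    (by norm_num)).const_mul (2 * Real.pi⁻¹)
  refine h.mono' ((continuous_Pker one_pos).mul (by fun_prop)).aestronglyMeasurable
    (.of_forall fun u => ?_)
  rw [Real.norm_of_nonneg (mul_nonneg (Pker_nonneg one_pos u) (Real.sqrt_nonneg _)), Pker_one_eq,
    Real.norm_eq_abs]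
  have h0 : 0 < 1 + |u| := by positivity
  have h1 : (1 + |u|) ^ (-(3 / 2) : ℝ) = √(1 + |u|) * ((1 + |u|) ^ 2)⁻¹ := by
    rw [Real.sqrt_eq_rpow, ← Real.rpow_natCast, ← Real.rpow_neg h0.le, ← Real.rpow_add h0]
    norm_num
  have h2 : (1 + u ^ 2)⁻¹ ≤ 2 * ((1 + |u|) ^ 2)⁻¹ := by
    rw [← div_eq_mul_inv, inv_eq_one_div, div_le_div_iff₀ (by positivity) (by positivity)]
    nlinarith [sq_abs u, sq_nonneg (1 - |u|)]
  have h3 : √|u| ≤ √(1 + |u|) := Real.sqrt_le_sqrt (by linarith)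
  rw [h1]
  calc Real.pi⁻¹ * (1 + u ^ 2)⁻¹ * √|u|
      ≤ Real.pi⁻¹ * (2 * ((1 + |u|) ^ 2)⁻¹) * √(1 + |u|) := by
        have := Real.pi_pos
        gcongr
    _ = _ := by ring

lemma Pker_mul_sqrt_eq {t : ℝ} (ht : 0 < t) (u : ℝ) :
    Pker t u * √|u| = (t⁻¹ * √t) * (Pker 1 (u / t) * √|u / t|) := by
  have h : √|u| = √t * √|u / t| := by
    rw [← Real.sqrt_mul ht.le, abs_div, abs_of_pos ht, mul_div_cancel₀ _ ht.ne']
  rw [h, Pker_eq_comp_div ht]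
  ring

lemma integrable_Pker_mul_sqrt {t : ℝ} (ht : 0 < t) :
    Integrable fun u : ℝ => Pker t u * √|u| := by
  rw [funext (Pker_mul_sqrt_eq ht)]
  exact (integrable_Pker_one_mul_sqrt.comp_div ht.ne').const_mul _

lemma integral_Pker_mul_sqrt {t : ℝ} (ht : 0 < t) :
    ∫ u : ℝ, Pker t u * √|u| = √t * ∫ u : ℝ, Pker 1 u * √|u| := by
  rw [funext (Pker_mul_sqrt_eq ht), integral_const_mul,
    Measure.integral_comp_div (fun u => Pker 1 u * √|u|), abs_of_pos ht, smul_eq_mul]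
  field_simp

lemma tendsto_sub_div_sq_add_sq {l : Filter ℝ} (hl : l ≤ Bornology.cobounded ℝ) {t : ℝ}
    (ht : 0 < t) (v : ℝ) :
    Tendsto (fun u : ℝ => (u - v) / (t ^ 2 + (u - v) ^ 2)) l (𝓝 0) ∧
      Tendsto (fun u : ℝ => 1 / (t ^ 2 + (u - v) ^ 2)) l (𝓝 0) := by
  have hw : Tendsto (fun u : ℝ => u - v) l (Bornology.cobounded ℝ) := by
    have := tendsto_norm_cobounded_atTop (E := ℝ)
    rw [← tendsto_norm_atTop_iff_cobounded]
    refine tendsto_atTop_mono (f := fun u : ℝ => ‖u‖ + -‖v‖)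
      (fun u => by linarith [norm_sub_norm_le u v]) ?_
    exact tendsto_atTop_add_const_right _ _ (this.mono_left hl)
  have hi := (tendsto_inv₀_cobounded.comp hw).norm
  simp only [Function.comp_def, norm_zero] at hi
  have hi2 : Tendsto (fun u : ℝ => ‖(u - v)⁻¹‖ ^ 2) l (𝓝 0) := by simpa using hi.pow 2
  have hi3 : ∀ᶠ u in l, u - v ≠ 0 := hw.eventually (Bornology.eventually_ne_cobounded 0)
  constructor
  · refine squeeze_zero_norm' (hi3.mono fun u hu => ?_) hi
    rw [norm_div, norm_inv, Real.norm_of_nonneg (r := t ^ 2 + _) (by positivity),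
      div_le_iff₀ (by positivity), inv_mul_eq_div, le_div_iff₀ (by positivity)]
    rw [Real.norm_eq_abs, abs_mul_abs_self]
    nlinarith
  · refine squeeze_zero_norm' (hi3.mono fun u hu => ?_) hi2
    rw [Real.norm_of_nonneg (by positivity), norm_inv, inv_pow, Real.norm_eq_abs, sq_abs, one_div]
    gcongr
    nlinarith

/-- A primitive of `u ↦ π² P_t(u) Q_t(v - u)`, obtained by partial fractions. -/
noncomputable def primPQ (t v u : ℝ) : ℝ :=
  (v ^ 2 + 4 * t ^ 2)⁻¹ *
      (Real.arctan (u / t) + Real.arctan ((u - v) / t)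
        + t / v * (Real.log (t ^ 2 + u ^ 2) - Real.log (t ^ 2 + (u - v) ^ 2)))
    - 2 * t ^ 3 * (v ^ 2 + 4 * t ^ 2)⁻¹ *
      ((v ^ 2 + 4 * t ^ 2)⁻¹ *
        ((1 - 4 * t ^ 2 / v ^ 2) / t * Real.arctan (u / t)
          + (3 + 4 * t ^ 2 / v ^ 2) / t * Real.arctan ((u - v) / t)
          + 2 / v * (Real.log (t ^ 2 + u ^ 2) - Real.log (t ^ 2 + (u - v) ^ 2)))
        + (2 * t ^ 2)⁻¹ * ((u - v) / (t ^ 2 + (u - v) ^ 2))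
        + (2 * t ^ 3)⁻¹ * Real.arctan ((u - v) / t)
        + v⁻¹ * (1 / (t ^ 2 + (u - v) ^ 2)))

lemma hasDerivAt_primPQ {t v : ℝ} (ht : 0 < t) (hv : v ≠ 0) (u : ℝ) :
    HasDerivAt (primPQ t v) (Real.pi ^ 2 * (Pker t u * Qker t (v - u))) u := by
  have hU : 0 < t ^ 2 + u ^ 2 := by positivity
  have hW : 0 < t ^ 2 + (u - v) ^ 2 := by positivity
  have hid := hasDerivAt_id' u
  have hA : HasDerivAt (fun u => Real.arctan (u / t)) (t / (t ^ 2 + u ^ 2)) u := by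
    convert! (hid.div_const t).arctan using 1
    field_simp
  have hB : HasDerivAt (fun u => Real.arctan ((u - v) / t)) (t / (t ^ 2 + (u - v) ^ 2)) u := by
    convert! ((hid.sub_const v).div_const t).arctan using 1
    field_simp
  have hsU : HasDerivAt (fun u => t ^ 2 + u ^ 2) (2 * u) u := by
    convert! (hid.pow 2).const_add (t ^ 2) using 1
    ring
  have hsW : HasDerivAt (fun u => t ^ 2 + (u - v) ^ 2) (2 * (u - v)) u := by
    convert! ((hid.sub_const v).pow 2).const_add (t ^ 2) using 1
    ring
  have hL := (hsU.log hU.ne').sub (hsW.log hW.ne')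
  have hF := (hid.sub_const v).div hsW hW.ne'
  have hG := (hasDerivAt_const u (1 : ℝ)).div hsW hW.ne'
  convert! (((hA.add hB).add (hL.const_mul (t / v))).const_mul (v ^ 2 + 4 * t ^ 2)⁻¹).sub
    (((((((hA.const_mul ((1 - 4 * t ^ 2 / v ^ 2) / t)).add
      (hB.const_mul ((3 + 4 * t ^ 2 / v ^ 2) / t))).add (hL.const_mul (2 / v))).const_mul
      (v ^ 2 + 4 * t ^ 2)⁻¹).add (hF.const_mul (2 * t ^ 2)⁻¹)).add
      (hB.const_mul (2 * t ^ 3)⁻¹)).add (hG.const_mul v⁻¹) |>.const_mul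
      (2 * t ^ 3 * (v ^ 2 + 4 * t ^ 2)⁻¹)) using 1
  have hD : v ^ 2 + 4 * t ^ 2 ≠ 0 := by positivity
  have hpi := Real.pi_ne_zero
  rw [← Qker_neg, neg_sub]
  unfold Pker Qker
  field_simp
  ring

lemma tendsto_primPQ {l : Filter ℝ} (hl : l ≤ Bornology.cobounded ℝ) {t v c : ℝ}
    (ht : 0 < t) (hv : v ≠ 0) (hA : Tendsto (fun u => Real.arctan (u / t)) l (𝓝 c))
    (hB : Tendsto (fun u => Real.arctan ((u - v) / t)) l (𝓝 c)) :
    Tendsto (primPQ t v) l (𝓝 ((v ^ 2 - 4 * t ^ 2) / (v ^ 2 + 4 * t ^ 2) ^ 2 * c)) := by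
  obtain ⟨hF, hG⟩ := tendsto_sub_div_sq_add_sq hl ht v
  have hL : Tendsto (fun u => Real.log (t ^ 2 + u ^ 2) - Real.log (t ^ 2 + (u - v) ^ 2)) l
      (𝓝 0) := by
    have h1 : Tendsto (fun u => 1 + v * (2 * ((u - v) / (t ^ 2 + (u - v) ^ 2))
        + v * (1 / (t ^ 2 + (u - v) ^ 2)))) l (𝓝 1) := by
      simpa using (((hF.const_mul 2).add (hG.const_mul v)).const_mul v).const_add 1
    have h2 := (Real.continuousAt_log one_ne_zero).tendsto.comp h1
    rw [Real.log_one] at h2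
    refine h2.congr fun u => ?_
    rw [← Real.log_div (by positivity) (by positivity)]
    simp only [Function.comp_def]
    congr 1
    have : t ^ 2 + (u - v) ^ 2 ≠ 0 := by positivity
    field_simp
    ring
  have h := (((hA.add hB).add (hL.const_mul (t / v))).const_mul (v ^ 2 + 4 * t ^ 2)⁻¹).sub
    (((((((hA.const_mul ((1 - 4 * t ^ 2 / v ^ 2) / t)).add
      (hB.const_mul ((3 + 4 * t ^ 2 / v ^ 2) / t))).add (hL.const_mul (2 / v))).const_mul
      (v ^ 2 + 4 * t ^ 2)⁻¹).add (hF.const_mul (2 * t ^ 2)⁻¹)).add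
      (hB.const_mul (2 * t ^ 3)⁻¹)).add (hG.const_mul v⁻¹) |>.const_mul
      (2 * t ^ 3 * (v ^ 2 + 4 * t ^ 2)⁻¹))
  convert! h using 2
  have hD : v ^ 2 + 4 * t ^ 2 ≠ 0 := by positivity
  field_simp
  ring

lemma integrable_Pker_mul_Qker {t : ℝ} (ht : 0 < t) (v : ℝ) :
    Integrable fun u => Pker t u * Qker t (v - u) :=
  ((integrable_Qker ht).comp_sub_left v).bdd_mul (continuous_Pker ht).aestronglyMeasurable
    (.of_forall fun u => by
      rw [Real.norm_of_nonneg (Pker_nonneg ht u)]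
      exact Pker_le ht u)

/-- The semigroup identity `P_t * Q_t = Q_{2t}`, away from the origin. -/
lemma integral_Pker_mul_Qker {t v : ℝ} (ht : 0 < t) (hv : v ≠ 0) :
    ∫ u, Pker t u * Qker t (v - u) = Qker (2 * t) v := by
  have hwt : Tendsto (fun u : ℝ => (u - v) / t) atTop atTop :=
    (tendsto_atTop_add_const_right _ (-v) tendsto_id).atTop_div_const ht
  have hwb : Tendsto (fun u : ℝ => (u - v) / t) atBot atBot :=
    (tendsto_atBot_add_const_right _ (-v) tendsto_id).atBot_div_const ht
  have ht1 := tendsto_primPQ (l := atTop)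
    (by rw [IsOrderBornology.cobounded_eq]; exact le_sup_right) ht hv
    (tendsto_nhds_of_tendsto_nhdsWithin
      (Real.tendsto_arctan_atTop.comp (tendsto_id.atTop_div_const ht)))
    (tendsto_nhds_of_tendsto_nhdsWithin (Real.tendsto_arctan_atTop.comp hwt))
  have hb1 := tendsto_primPQ (l := atBot)
    (by rw [IsOrderBornology.cobounded_eq]; exact le_sup_left) ht hv
    (tendsto_nhds_of_tendsto_nhdsWithin
      (Real.tendsto_arctan_atBot.comp (tendsto_id.atBot_div_const ht)))
    (tendsto_nhds_of_tendsto_nhdsWithin (Real.tendsto_arctan_atBot.comp hwb))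
  have h := integral_of_hasDerivAt_of_tendsto (hasDerivAt_primPQ ht hv)
    ((integrable_Pker_mul_Qker ht v).const_mul _) hb1 ht1
  rw [integral_const_mul] at h
  have hpi := Real.pi_ne_zero
  have hD : v ^ 2 + 4 * t ^ 2 ≠ 0 := by positivity
  have hD' : (2 * t) ^ 2 + v ^ 2 ≠ 0 := by positivity
  apply mul_left_cancel₀ (pow_ne_zero 2 hpi)
  rw [h]
  unfold Qker
  field_simp
  ring

/-- **Minkowski's integral inequality**, for a family of functions whose `L_p` norms are bounded
uniformly by `K`. -/
lemma lintegral_rpow_lintegral_mul_le {S H : Type*} [MeasurableSpace S] [MeasurableSpace H]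
    {ν : Measure S} [SFinite ν] {μ : Measure H} [SFinite μ] {p : ℝ} (hp : 1 ≤ p)
    {w : S → ENNReal} (hw : Measurable w) {G : S → H → ENNReal}
    (hG : Measurable (Function.uncurry G)) {K : ENNReal}
    (hK : ∀ s, (∫⁻ h, G s h ^ p ∂μ) ^ (1 / p) ≤ K) :
    (∫⁻ h, (∫⁻ s, w s * G s h ∂ν) ^ p ∂μ) ^ (1 / p) ≤ (∫⁻ s, w s ∂ν) * K := by
  have hp0 : 0 < p := by linarith
  have hGs : ∀ h, Measurable fun s => G s h := fun h => hG.comp measurable_prodMk_right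
  set M := ∫⁻ s, w s ∂ν
  have holder : ∀ h, (∫⁻ s, w s * G s h ∂ν) ^ p ≤ M ^ (p - 1) * ∫⁻ s, w s * G s h ^ p ∂ν := by
    intro h
    have h1 := eLpNorm_le_eLpNorm_mul_rpow_measure_univ (μ := ν.withDensity w)
      (p := 1) (q := ENNReal.ofReal p) (f := fun s => G s h)
      (by simpa using hp) (hGs h).aestronglyMeasurable
    rw [eLpNorm_one_eq_lintegral_enorm, eLpNorm_eq_lintegral_rpow_enorm_toReal
      (by simpa using hp0) ENNReal.ofReal_ne_top, ENNReal.toReal_ofReal hp0.le] at h1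
    simp only [enorm_eq_self, ENNReal.toReal_one, div_one] at h1
    rw [lintegral_withDensity_eq_lintegral_mul _ hw (hGs h),
      lintegral_withDensity_eq_lintegral_mul _ hw ((hGs h).pow_const p),
      withDensity_apply _ MeasurableSet.univ, setLIntegral_univ] at h1
    simp only [Pi.mul_apply] at h1
    calc _ ≤ _ := ENNReal.rpow_le_rpow h1 hp0.le
      _ = _ := by
        rw [ENNReal.mul_rpow_of_nonneg _ _ hp0.le, ← ENNReal.rpow_mul, ← ENNReal.rpow_mul,
          one_div_mul_cancel hp0.ne', ENNReal.rpow_one, sub_mul, one_div_mul_cancel hp0.ne',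
          one_mul, mul_comm]
  have hK' : ∀ s, ∫⁻ h, G s h ^ p ∂μ ≤ K ^ p := fun s => by
    have := ENNReal.rpow_le_rpow (hK s) hp0.le
    rwa [← ENNReal.rpow_mul, one_div_mul_cancel hp0.ne', ENNReal.rpow_one] at this
  have hmeas : Measurable (Function.uncurry fun h s => w s * G s h ^ p) := by
    refine (hw.comp measurable_snd).mul ?_
    exact (hG.comp measurable_swap).pow_const p
  have key : ∫⁻ h, (∫⁻ s, w s * G s h ∂ν) ^ p ∂μ ≤ (M * K) ^ p := by
    calc ∫⁻ h, (∫⁻ s, w s * G s h ∂ν) ^ p ∂μ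
        ≤ ∫⁻ h, M ^ (p - 1) * ∫⁻ s, w s * G s h ^ p ∂ν ∂μ := lintegral_mono holder
      _ = M ^ (p - 1) * ∫⁻ s, w s * ∫⁻ h, G s h ^ p ∂μ ∂ν := by
        rw [lintegral_const_mul _ (Measurable.lintegral_prod_right hmeas),
          lintegral_lintegral_swap hmeas.aemeasurable]
        congr 1
        refine lintegral_congr fun s => ?_
        exact lintegral_const_mul _ ((hG.comp measurable_prodMk_left).pow_const p)
      _ ≤ M ^ (p - 1) * ∫⁻ s, w s * K ^ p ∂ν := by
        gcongr with s
        exact hK' s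
      _ = M ^ (p - 1) * M ^ (1 : ℝ) * K ^ p := by
        rw [lintegral_mul_const _ hw, ENNReal.rpow_one, mul_assoc]
      _ = (M * K) ^ p := by
        rw [← ENNReal.rpow_add_of_nonneg _ _ (by linarith) zero_le_one, sub_add_cancel,
          ENNReal.mul_rpow_of_nonneg _ _ hp0.le]
  calc _ ≤ ((M * K) ^ p) ^ (1 / p) := ENNReal.rpow_le_rpow key (by positivity)
    _ = M * K := by
      rw [← ENNReal.rpow_mul, mul_one_div_cancel hp0.ne', ENNReal.rpow_one]

lemma eLpNorm_ofReal_eq {H X : Type*} [MeasurableSpace H] [NormedAddCommGroup X] {μ : Measure H}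
    {p : ℝ} (hp : 1 ≤ p) (g : H → X) :
    eLpNorm g (ENNReal.ofReal p) μ = (∫⁻ h, ‖g h‖ₑ ^ p ∂μ) ^ (1 / p) := by
  have hp0 : 0 < p := by linarith
  rw [eLpNorm_eq_lintegral_rpow_enorm_toReal (by simpa using hp0) ENNReal.ofReal_ne_top,
    ENNReal.toReal_ofReal hp0.le]

/-- Right multiplication by `(r, s, u)` in the Heisenberg group. -/
def rmul (r s u : ℝ) (h : HR) : HR := (h.1 + r, h.2.1 + s, h.2.2 + u + h.1 * s)

lemma measurePreserving_rmul (r s u : ℝ) : MeasurePreserving (rmul r s u) := by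
  change MeasurePreserving (rmul r s u) (volume.prod (volume.prod volume))
    (volume.prod (volume.prod volume))
  have h2 : ∀ v : ℝ, MeasurePreserving (fun k : ℝ × ℝ => (k.1 + s, k.2 + v))
      (volume.prod volume) (volume.prod volume) := fun v =>
    (measurePreserving_add_right volume s).prod (measurePreserving_add_right volume v)
  refine (measurePreserving_add_right volume r).skew_product
    (g := fun x (k : ℝ × ℝ) => (k.1 + s, k.2 + u + x * s)) ?_ (.of_forall fun x => ?_)
  · fun_prop
  · simpa only [add_assoc] using (h2 (u + x * s)).map_eq

/-- Vertical increments over `r * s` decompose into horizontal ones. -/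
lemma eLpNorm_vertical_increment_le {X : Type*} [NormedAddCommGroup X]
    {F : HR → X} (hF : Continuous F) {r s : ℝ} {p : ℝ}
    (hp : 1 ≤ p) {a b : ENNReal}
    (ha : eLpNorm (fun h => F (rmul r 0 0 h) - F h) (ENNReal.ofReal p) ≤ a)
    (hb : eLpNorm (fun h => F (rmul 0 s 0 h) - F h) (ENNReal.ofReal p) ≤ b) :
    eLpNorm (fun h => F h - F (rmul 0 0 (r * s) h)) (ENNReal.ofReal p) ≤ 2 * (a + b) := by
  have hp1 : 1 ≤ ENNReal.ofReal p := by simpa using hp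
  have hrc : ∀ r s u, Continuous (rmul r s u) := fun r s u => by unfold rmul; fun_prop
  set α := fun h => F (rmul r 0 0 h) - F h
  set β := fun h => F (rmul 0 s 0 h) - F h
  have hα : Continuous α := (hF.comp (hrc _ _ _)).sub hF
  have hβ : Continuous β := (hF.comp (hrc _ _ _)).sub hF
  have heq : (fun h => F h - F (rmul 0 0 (r * s) h)) =
      ((α ∘ rmul 0 s (r * s)) + (β ∘ rmul 0 0 (r * s))) - (α + β ∘ rmul r 0 0) := by
    funext h
    have e : F (rmul r 0 0 (rmul 0 s (r * s) h)) = F (rmul 0 s 0 (rmul r 0 0 h)) := by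
      congr 1
      simp only [rmul, Prod.mk.injEq]
      refine ⟨by ring, by ring, by ring⟩
    have e' : rmul 0 s 0 (rmul 0 0 (r * s) h) = rmul 0 s (r * s) h := by
      simp [rmul]
    simp only [Pi.add_apply, Pi.sub_apply, Function.comp_apply, α, β, e, e']
    abel
  have hm : ∀ {g : HR → X}, Continuous g → ∀ r s u,
      AEStronglyMeasurable (g ∘ rmul r s u) volume := fun hg r s u =>
    (hg.comp (hrc r s u)).aestronglyMeasurable
  have hn : ∀ {g : HR → X}, Continuous g → ∀ r s u,
      eLpNorm (g ∘ rmul r s u) (ENNReal.ofReal p) = eLpNorm g (ENNReal.ofReal p) :=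
    fun hg r s u =>
      eLpNorm_comp_measurePreserving hg.aestronglyMeasurable (measurePreserving_rmul r s u)
  rw [heq]
  refine (eLpNorm_sub_le ((hm hα _ _ _).add (hm hβ _ _ _))
    (hα.aestronglyMeasurable.add (hm hβ _ _ _)) hp1).trans ?_
  rw [two_mul]
  refine add_le_add ((eLpNorm_add_le (hm hα _ _ _) (hm hβ _ _ _) hp1).trans ?_)
    ((eLpNorm_add_le hα.aestronglyMeasurable (hm hβ _ _ _) hp1).trans ?_)
  · rw [hn hα, hn hβ]
    exact add_le_add ha hb
  · rw [hn hβ]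
    exact add_le_add ha hb

section

variable {X : Type*} [NormedAddCommGroup X] [NormedSpace ℝ X]

lemma integrable_conv_integrand {ψ : ℝ → ℝ} (hψ : Integrable ψ) {g : HR → X} (hg : Continuous g)
    {C : ℝ} (hC : ∀ h, ‖g h‖ ≤ C) (x y z : ℝ) :
    Integrable fun u => ψ u • g (x, y, z - u) :=
  hψ.smul_bdd C (by fun_prop) (.of_forall fun _ => hC _)

lemma continuous_conv {ψ : ℝ → ℝ} (hψ : Integrable ψ) {g : HR → X} (hg : Continuous g)
    {C : ℝ} (hC : ∀ h, ‖g h‖ ≤ C) : Continuous (conv ψ g) := by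
  refine continuous_of_dominated (bound := fun u => ‖ψ u‖ * C) (fun h => ?_) (fun h => ?_)
    (hψ.norm.mul_const C) (.of_forall fun u => ?_)
  · exact (integrable_conv_integrand hψ hg hC _ _ _).aestronglyMeasurable
  · refine .of_forall fun u => ?_
    rw [norm_smul]
    gcongr
    exact hC _
  · fun_prop

lemma eLpNorm_conv_le {ψ : ℝ → ℝ} (hψ : Measurable ψ) {g : HR → X} (hg : Continuous g)
    {p : ℝ} (hp : 1 ≤ p) :
    eLpNorm (conv ψ g) (ENNReal.ofReal p) ≤
      (∫⁻ u, ‖ψ u‖ₑ) * eLpNorm g (ENNReal.ofReal p) := by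
  have h := lintegral_rpow_lintegral_mul_le (ν := (volume : Measure ℝ))
    (μ := (volume : Measure HR)) hp hψ.enorm (K := eLpNorm g (ENNReal.ofReal p))
    (G := fun u (h : HR) => ‖g (h.1, h.2.1, h.2.2 - u)‖ₑ)
    (Continuous.measurable (by unfold Function.uncurry; fun_prop)) (fun u => by
      rw [← eLpNorm_comp_measurePreserving hg.aestronglyMeasurable
        (measurePreserving_rmul 0 0 (-u)), eLpNorm_ofReal_eq hp]
      simp [rmul, sub_eq_add_neg])
  rw [eLpNorm_ofReal_eq hp]
  refine le_trans ?_ h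
  gcongr with k
  refine (enorm_integral_le_lintegral_enorm _).trans_eq ?_
  simp only [enorm_smul]

/-- The `L_p` norm of an increment along a measure preserving flow is controlled by the `L_p` norm
of the derivative along the flow. -/
lemma eLpNorm_increment_le {T : ℝ → HR → HR} (hT : Continuous (Function.uncurry T))
    (hmp : ∀ σ, MeasurePreserving (T σ)) {F A : HR → X} (hA : Continuous A)
    {s : ℝ} (hs : 0 ≤ s) (hFA : ∀ h, F (T s h) - F h = ∫ σ in 0..s, A (T σ h))
    {p : ℝ} (hp : 1 ≤ p) :
    eLpNorm (fun h => F (T s h) - F h) (ENNReal.ofReal p) ≤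
      ENNReal.ofReal s * eLpNorm A (ENNReal.ofReal p) := by
  have hTσ : Continuous (Function.uncurry fun σ h => A (T σ h)) := hA.comp hT
  have h := lintegral_rpow_lintegral_mul_le (ν := volume.restrict (Set.Ioc 0 s))
    (μ := (volume : Measure HR)) hp (w := fun _ => 1) measurable_const
    (K := eLpNorm A (ENNReal.ofReal p)) (G := fun σ h => ‖A (T σ h)‖ₑ)
    (Continuous.measurable (Continuous.enorm hTσ)) (fun σ => by
      rw [← eLpNorm_comp_measurePreserving hA.aestronglyMeasurable (hmp σ), eLpNorm_ofReal_eq hp]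
      rfl)
  simp only [one_mul, lintegral_const, Measure.restrict_apply MeasurableSet.univ, Set.univ_inter,
    Real.volume_Ioc, sub_zero] at h
  rw [eLpNorm_ofReal_eq hp]
  refine le_trans ?_ h
  gcongr with k
  rw [hFA, intervalIntegral.integral_of_le hs]
  exact enorm_integral_le_lintegral_enorm _

/-- Central convolution commutes with differentiation along a flow that commutes with central
translations. -/
lemma conv_flow_sub [CompleteSpace X] {T : ℝ → HR → HR} (hT : Continuous (Function.uncurry T))
    (hT0 : ∀ h, T 0 h = h)
    (hTc : ∀ σ h u, T σ (h.1, h.2.1, h.2.2 - u) =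
      ((T σ h).1, (T σ h).2.1, (T σ h).2.2 - u))
    {ψ : ℝ → ℝ} (hψ : Integrable ψ) {f g : HR → X} (hf : Continuous f) (hg : Continuous g)
    {Cf Cg : ℝ} (hCf : ∀ h, ‖f h‖ ≤ Cf) (hCg : ∀ h, ‖g h‖ ≤ Cg)
    (hd : ∀ h σ, HasDerivAt (fun σ => f (T σ h)) (g (T σ h)) σ) (s : ℝ) (h : HR) :
    conv ψ f (T s h) - conv ψ f h = ∫ σ in 0..s, conv ψ g (T σ h) := by
  have hcont : Continuous fun q : ℝ × ℝ => T q.1 (h.1, h.2.1, h.2.2 - q.2) :=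
    hT.comp (by fun_prop : Continuous fun q : ℝ × ℝ => (q.1, (h.1, h.2.1, h.2.2 - q.2)))
  have hftc : ∀ u, f (T s (h.1, h.2.1, h.2.2 - u)) - f (h.1, h.2.1, h.2.2 - u) =
      ∫ σ in 0..s, g (T σ (h.1, h.2.1, h.2.2 - u)) := fun u => by
    have hc : Continuous fun σ => g (T σ (h.1, h.2.1, h.2.2 - u)) :=
      hg.comp (hcont.comp (by fun_prop : Continuous fun σ : ℝ => (σ, u)))
    rw [intervalIntegral.integral_eq_sub_of_hasDerivAt (fun σ _ => hd _ σ)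
      (hc.intervalIntegrable _ _), hT0]
  have hint : Integrable (Function.uncurry fun σ u => ψ u • g (T σ (h.1, h.2.1, h.2.2 - u)))
      ((volume.restrict (Set.uIoc 0 s)).prod volume) := by
    have h1 : Integrable (fun q : ℝ × ℝ => ψ q.2)
        ((volume.restrict (Set.uIoc 0 s)).prod volume) := by
      have : IsFiniteMeasure (volume.restrict (Set.uIoc 0 s)) := by
        unfold Set.uIoc
        infer_instance
      simpa using (integrable_const (μ := volume.restrict (Set.uIoc 0 s)) (1 : ℝ)).mul_prod hψ
    exact h1.smul_bdd Cg (hg.comp hcont).aestronglyMeasurable (.of_forall fun _ => hCg _)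
  calc conv ψ f (T s h) - conv ψ f h
      = ∫ u, ψ u • (f (T s (h.1, h.2.1, h.2.2 - u)) - f (h.1, h.2.1, h.2.2 - u)) := by
        simp only [conv, hTc, smul_sub]
        exact (integral_sub (integrable_conv_integrand hψ hf hCf _ _ _)
          (integrable_conv_integrand hψ hf hCf _ _ _)).symm
    _ = ∫ u, ∫ σ in 0..s, ψ u • g (T σ (h.1, h.2.1, h.2.2 - u)) := by
        simp only [hftc, intervalIntegral.integral_smul]
    _ = ∫ σ in 0..s, conv ψ g (T σ h) := by
        rw [← intervalIntegral_integral_swap hint]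
        simp only [hTc, conv]

/-- `Q_{2t} * f = P_t * (Q_t * f)`. -/
lemma conv_Qker_two_mul [CompleteSpace X] {t : ℝ} (ht : 0 < t) {f : HR → X} (hf : Continuous f)
    {C : ℝ} (hC : ∀ h, ‖f h‖ ≤ C) (h : HR) :
    conv (Qker (2 * t)) f h = conv (Pker t) (conv (Qker t) f) h := by
  set φ : ℝ → X := fun z => f (h.1, h.2.1, h.2.2 - z)
  have hφ : Continuous φ := by fun_prop
  have hint : Integrable (Function.uncurry fun u v => (Pker t u * Qker t (v - u)) • φ v)
      (volume.prod volume) := by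
    have h1 := ((integrable_Pker ht).convolution_integrand (ContinuousLinearMap.mul ℝ ℝ)
      (μ := volume) (integrable_Qker ht)).swap
    exact h1.smul_bdd C (hφ.comp continuous_snd).aestronglyMeasurable (.of_forall fun _ => hC _)
  calc conv (Qker (2 * t)) f h
      = ∫ v, (∫ u, Pker t u * Qker t (v - u)) • φ v := by
        refine integral_congr_ae ?_
        filter_upwards [compl_mem_ae_iff.2 (measure_singleton (0 : ℝ))] with v hv
        rw [integral_Pker_mul_Qker ht hv]
    _ = ∫ v, ∫ u, (Pker t u * Qker t (v - u)) • φ v := by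
        simp only [integral_smul_const]
    _ = ∫ u, ∫ v, (Pker t u * Qker t (v - u)) • φ v := (integral_integral_swap hint).symm
    _ = conv (Pker t) (conv (Qker t) f) h := by
        refine integral_congr_ae (.of_forall fun u => ?_)
        simp only [mul_smul, integral_smul, conv]
        congr 1
        rw [← integral_sub_right_eq_self (fun w => Qker t w • f (h.1, h.2.1, h.2.2 - u - w)) u]
        simp only [φ, sub_sub, add_sub_cancel]

/-- If vertical increments of `F` are `1/2`-Hölder in `L_p`, then `F` is `√t`-close to `P_t * F`. -/
lemma eLpNorm_sub_conv_Pker_le [CompleteSpace X] {t : ℝ} (ht : 0 < t) {F : HR → X}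
    (hF : Continuous F) {C : ℝ} (hC : ∀ h, ‖F h‖ ≤ C) {p : ℝ} (hp : 1 ≤ p) {K : ENNReal}
    (hK : ∀ u, eLpNorm (fun h => F h - F (h.1, h.2.1, h.2.2 - u)) (ENNReal.ofReal p) ≤
      ENNReal.ofReal (√|u|) * K) :
    eLpNorm (fun h => F h - conv (Pker t) F h) (ENNReal.ofReal p) ≤
      ENNReal.ofReal (√t * ∫ u : ℝ, Pker 1 u * √|u|) * K := by
  have hK' : ∀ u, (∫⁻ h : HR, ‖(√|u|)⁻¹ • (F h - F (h.1, h.2.1, h.2.2 - u))‖ₑ ^ p) ^ (1 / p)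
      ≤ K := fun u => by
    rw [← eLpNorm_ofReal_eq hp (fun h : HR => (√|u|)⁻¹ • (F h - F (h.1, h.2.1, h.2.2 - u)))]
    refine (eLpNorm_const_smul_le (c := (√|u|)⁻¹)
      (f := fun h : HR => F h - F (h.1, h.2.1, h.2.2 - u))).trans ?_
    refine (mul_le_mul_right (hK u) _).trans ?_
    rw [← mul_assoc, Real.enorm_of_nonneg (by positivity), ← ENNReal.ofReal_mul (by positivity)]
    refine mul_le_of_le_one_left zero_le ?_
    rw [ENNReal.ofReal_le_one]
    exact inv_mul_le_one
  have hnn : ∀ u : ℝ, 0 ≤ Pker t u * √|u| := fun u =>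
    mul_nonneg (Pker_nonneg ht u) (Real.sqrt_nonneg _)
  have h := lintegral_rpow_lintegral_mul_le (ν := (volume : Measure ℝ))
    (μ := (volume : Measure HR)) hp (w := fun u => ENNReal.ofReal (Pker t u * √|u|))
    (((continuous_Pker ht).mul (by fun_prop)).measurable.ennreal_ofReal)
    (G := fun u (h : HR) => ‖(√|u|)⁻¹ • (F h - F (h.1, h.2.1, h.2.2 - u))‖ₑ)
    (by
      simp only [enorm_smul, Function.uncurry_def]
      refine (measurable_enorm.comp (by fun_prop : Measurable fun q : ℝ × HR => (√|q.1|)⁻¹)).mul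
        (Continuous.measurable (by fun_prop))) hK'
  rw [← ofReal_integral_eq_lintegral_ofReal (integrable_Pker_mul_sqrt ht) (.of_forall hnn),
    integral_Pker_mul_sqrt ht] at h
  rw [eLpNorm_ofReal_eq hp]
  refine le_trans ?_ h
  gcongr with k
  have e : F k - conv (Pker t) F k =
      ∫ u, (Pker t u * √|u|) • ((√|u|)⁻¹ • (F k - F (k.1, k.2.1, k.2.2 - u))) := by
    calc F k - conv (Pker t) F k
        = (∫ u, Pker t u • F k) - ∫ u, Pker t u • F (k.1, k.2.1, k.2.2 - u) := by
          rw [integral_smul_const, integral_Pker ht, one_smul, conv]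
      _ = ∫ u, Pker t u • (F k - F (k.1, k.2.1, k.2.2 - u)) := by
          simp only [smul_sub]
          exact (integral_sub ((integrable_Pker ht).smul_const _)
            (integrable_conv_integrand (integrable_Pker ht) hF hC _ _ _)).symm
      _ = _ := by
          congr 1 with u
          rcases eq_or_ne u 0 with rfl | hu
          · simp
          · have : √|u| ≠ 0 := by positivity
            rw [smul_smul, mul_assoc, mul_inv_cancel₀ this, mul_one]
  rw [e]
  refine (enorm_integral_le_lintegral_enorm _).trans_eq (lintegral_congr fun u => ?_)
  rw [enorm_smul (Pker t u * √|u|), Real.enorm_of_nonneg (hnn u)]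

lemma eLpNorm_sub_vertical_le {X : Type*} [NormedAddCommGroup X]
    {F : HR → X} (hF : Continuous F) {p : ℝ} (hp : 1 ≤ p)
    {a b : ENNReal}
    (ha : ∀ r, 0 ≤ r → eLpNorm (fun h => F (rmul r 0 0 h) - F h) (ENNReal.ofReal p) ≤
      ENNReal.ofReal r * a)
    (hb : ∀ s, 0 ≤ s → eLpNorm (fun h => F (rmul 0 s 0 h) - F h) (ENNReal.ofReal p) ≤
      ENNReal.ofReal s * b) (u : ℝ) :
    eLpNorm (fun h => F h - F (h.1, h.2.1, h.2.2 - u)) (ENNReal.ofReal p) ≤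
      ENNReal.ofReal (√|u|) * (2 * (a + b)) := by
  have hu := Real.sqrt_nonneg |u|
  have h := eLpNorm_vertical_increment_le hF hp (ha _ hu) (hb _ hu)
  rw [Real.mul_self_sqrt (abs_nonneg u), ← mul_add, mul_left_comm] at h
  rcases le_total u 0 with hu0 | hu0
  · simpa [rmul, abs_of_nonpos hu0, ← sub_eq_add_neg] using h
  · rw [abs_of_nonneg hu0] at h ⊢
    have hr : Continuous (rmul 0 0 u) := by unfold rmul; fun_prop
    have hm : AEStronglyMeasurable (fun h => F h - F (rmul 0 0 u h)) volume :=
      (hF.sub (hF.comp hr)).aestronglyMeasurable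
    rw [← eLpNorm_comp_measurePreserving hm (measurePreserving_rmul 0 0 (-u)), ← eLpNorm_neg] at h
    convert! h using 2
    funext k
    simp [rmul, sub_eq_add_neg]

lemma hasDerivAt_comp_rmul_a {f : HR → X} (hf : Differentiable ℝ f) (h : HR) (σ : ℝ) :
    HasDerivAt (fun σ => f (rmul σ 0 0 h)) (da f (rmul σ 0 0 h)) σ := by
  have hc : HasDerivAt (fun σ => rmul σ 0 0 h) (1, 0, 0) σ := by
    unfold rmul
    simp only [mul_zero, add_zero]
    exact ((hasDerivAt_id' σ).const_add h.1).prodMk (hasDerivAt_const σ _)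
  exact (hf _).hasFDerivAt.comp_hasDerivAt σ hc

lemma hasDerivAt_comp_rmul_b {f : HR → X} (hf : Differentiable ℝ f) (h : HR) (σ : ℝ) :
    HasDerivAt (fun σ => f (rmul 0 σ 0 h)) (db f (rmul 0 σ 0 h)) σ := by
  have hc : HasDerivAt (fun σ => rmul 0 σ 0 h) (0, 1, h.1) σ := by
    unfold rmul
    simp only [add_zero]
    have hz := ((hasDerivAt_id' σ).const_mul h.1).const_add h.2.2
    rw [mul_one] at hz
    exact (hasDerivAt_const σ _).prodMk (((hasDerivAt_id' σ).const_add h.2.1).prodMk hz)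
  have := (hf (rmul 0 σ 0 h)).hasFDerivAt.comp_hasDerivAt σ hc
  have e : ((0, 1, h.1) : HR) = (0, 1, 0) + h.1 • (0, 0, 1) := by simp
  rw [e, map_add, map_smul] at this
  simpa [db, rmul] using! this

lemma eLpNorm_Qker_sub_le [CompleteSpace X] {t : ℝ} (ht : 0 < t) {f : HR → X}
    (hf : Differentiable ℝ f) (ha : Continuous (da f)) (hb : Continuous (db f)) {C Ca Cb : ℝ}
    (hC : ∀ h, ‖f h‖ ≤ C) (hCa : ∀ h, ‖da f h‖ ≤ Ca) (hCb : ∀ h, ‖db f h‖ ≤ Cb)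
    {p : ℝ} (hp : 1 ≤ p) :
    eLpNorm (fun h => conv (Qker t) f h - conv (Qker (2 * t)) f h) (ENNReal.ofReal p) ≤
      ENNReal.ofReal (√t * ∫ u : ℝ, Pker 1 u * √|u|) *
        (2 * (eLpNorm (conv (Qker t) (da f)) (ENNReal.ofReal p)
          + eLpNorm (conv (Qker t) (db f)) (ENNReal.ofReal p))) := by
  have hQ := integrable_Qker ht
  have hF := continuous_conv hQ hf.continuous hC
  have hFC : ∀ h, ‖conv (Qker t) f h‖ ≤ ∫ u, ‖Qker t u‖ * C := fun h =>
    norm_integral_le_of_norm_le (hQ.norm.mul_const C) (.of_forall fun u => by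
      rw [norm_smul]
      gcongr
      exact hC _)
  rw [funext fun h => congrArg (conv (Qker t) f h - ·) (conv_Qker_two_mul ht hf.continuous hC h)]
  refine eLpNorm_sub_conv_Pker_le ht hF hFC hp
    (eLpNorm_sub_vertical_le hF hp (fun r hr => ?_) fun s hs => ?_)
  · have hT : Continuous (Function.uncurry fun σ => rmul σ 0 0) := by
      unfold rmul Function.uncurry
      fun_prop
    exact eLpNorm_increment_le hT (fun _ => measurePreserving_rmul _ _ _)
      (continuous_conv hQ ha hCa) hr
      (conv_flow_sub hT (fun h => by simp [rmul]) (fun σ h u => by simp [rmul]) hQ hf.continuous ha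
        hC hCa (hasDerivAt_comp_rmul_a hf) r) hp
  · have hT : Continuous (Function.uncurry fun σ => rmul 0 σ 0) := by
      unfold rmul Function.uncurry
      fun_prop
    exact eLpNorm_increment_le hT (fun _ => measurePreserving_rmul _ _ _)
      (continuous_conv hQ hb hCb) hs
      (conv_flow_sub hT (fun h => by simp [rmul])
        (fun σ h u => by simp only [rmul, Prod.mk.injEq, true_and]; ring) hQ hf.continuous hb
        hC hCb (hasDerivAt_comp_rmul_b hf) s) hp

lemma eLpNorm_conv_lt_top {ψ : ℝ → ℝ} (hψ : Integrable ψ) (hψm : Measurable ψ) {g : HR → X}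
    (hg : Continuous g) (hgc : HasCompactSupport g) {p : ℝ} (hp : 1 ≤ p) :
    eLpNorm (conv ψ g) (ENNReal.ofReal p) < ⊤ :=
  (eLpNorm_conv_le hψm hg hp).trans_lt
    (ENNReal.mul_lt_top hψ.2 (hg.memLp_of_hasCompactSupport hgc).2)

end

lemma integral_rpow_eq_toReal {H X : Type*} [MeasurableSpace H] [NormedAddCommGroup X]
    {μ : Measure H} {p : ℝ}
    (hp : 1 ≤ p) {g : H → X} (hg : AEStronglyMeasurable g μ) :
    (∫ h, ‖g h‖ ^ p ∂μ) ^ (1 / p) = (eLpNorm g (ENNReal.ofReal p) μ).toReal := by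
  have hp0 : 0 < p := by linarith
  rw [eLpNorm_ofReal_eq hp, ← ENNReal.toReal_rpow, integral_eq_lintegral_of_nonneg_ae
    (.of_forall fun h => by positivity) (hg.norm.aemeasurable.pow_const p).aestronglyMeasurable]
  simp only [← ENNReal.ofReal_rpow_of_nonneg (norm_nonneg _) hp0.le, ofReal_norm]

/-- The sum of two `L_p` norms is at most twice the `L_p(ℓ_p²)` norm of the pair. -/
lemma toReal_eLpNorm_add_le {H X : Type*} [MeasurableSpace H] [NormedAddCommGroup X]
    {μ : Measure H} {p : ℝ}
    (hp : 1 ≤ p) {g₁ g₂ : H → X} (h₁ : MemLp g₁ (ENNReal.ofReal p) μ)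
    (h₂ : MemLp g₂ (ENNReal.ofReal p) μ) :
    (eLpNorm g₁ (ENNReal.ofReal p) μ + eLpNorm g₂ (ENNReal.ofReal p) μ).toReal ≤
      2 * (∫ h, (‖g₁ h‖ ^ p + ‖g₂ h‖ ^ p) ∂μ) ^ (1 / p) := by
  have hp0 : 0 < p := by linarith
  have hi : ∀ {g : H → X}, MemLp g (ENNReal.ofReal p) μ → Integrable (fun h => ‖g h‖ ^ p) μ :=
    fun hg => by
      simpa [ENNReal.toReal_ofReal hp0.le] using
        hg.integrable_norm_rpow (by simpa using hp0) ENNReal.ofReal_ne_top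
  have hn : ∀ (g : H → X), 0 ≤ ∫ h, ‖g h‖ ^ p ∂μ := fun g =>
    integral_nonneg fun h => by positivity
  rw [ENNReal.toReal_add h₁.2.ne h₂.2.ne, ← integral_rpow_eq_toReal hp h₁.1,
    ← integral_rpow_eq_toReal hp h₂.1, integral_add (hi h₁) (hi h₂), two_mul]
  exact add_le_add
    (Real.rpow_le_rpow (hn _) (le_add_of_nonneg_right (hn _)) (by positivity))
    (Real.rpow_le_rpow (hn _) (le_add_of_nonneg_left (hn _)) (by positivity))

end HR

open HR in
/-- Lemma 2.4: `‖Q_t*f − Q_{2t}*f‖_{L_p} ≲ √t ‖Q_t*∇_ℍ f‖_{L_p(ℓ_p²)}`. -/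
theorem increment_lemma :
    ∃ C : ℝ, 0 < C ∧
      ∀ p : ℝ, 1 ≤ p → ∀ t : ℝ, 0 < t →
        ∀ (X : Type) [NormedAddCommGroup X] [NormedSpace ℝ X] [CompleteSpace X],
          ∀ f : HR → X, ContDiff ℝ (⊤ : ℕ∞) f → HasCompactSupport f →
            (∫ h : HR, ‖conv (Qker t) f h - conv (Qker (2 * t)) f h‖ ^ p) ^ (1 / p) ≤
              C * Real.sqrt t *
                (∫ h : HR,
                  (‖conv (Qker t) (da f) h‖ ^ p + ‖conv (Qker t) (db f) h‖ ^ p)) ^ (1 / p) := by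
  set I := ∫ u : ℝ, Pker 1 u * √|u|
  have hI : 0 ≤ I := integral_nonneg fun u =>
    mul_nonneg (Pker_nonneg one_pos u) (Real.sqrt_nonneg _)
  refine ⟨4 * I + 1, by positivity, ?_⟩
  intro p hp t ht X _ _ _ f hf hfc
  have hfd : Continuous (fderiv ℝ f) := hf.continuous_fderiv (by simp)
  have ha : Continuous (da f) := by unfold da; fun_prop
  have hb : Continuous (db f) := by unfold db; fun_prop
  have hac : HasCompactSupport (da f) :=
    (hfc.fderiv ℝ).comp_left (g := fun L : HR →L[ℝ] X => L (1, 0, 0)) (by simp)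
  have hbc : HasCompactSupport (db f) := (hfc.fderiv ℝ).mono fun h hh => by
    contrapose! hh
    simp only [Function.notMem_support] at hh ⊢
    simp [db, hh]
  obtain ⟨C, hC⟩ := hfc.exists_bound_of_continuous hf.continuous
  obtain ⟨Ca, hCa⟩ := hac.exists_bound_of_continuous ha
  obtain ⟨Cb, hCb⟩ := hbc.exists_bound_of_continuous hb
  have hQ := integrable_Qker ht
  have hQm := (continuous_Qker ht).measurable
  have hA : MemLp (conv (Qker t) (da f)) (ENNReal.ofReal p) :=
    ⟨(continuous_conv hQ ha hCa).aestronglyMeasurable, eLpNorm_conv_lt_top hQ hQm ha hac hp⟩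
  have hB : MemLp (conv (Qker t) (db f)) (ENNReal.ofReal p) :=
    ⟨(continuous_conv hQ hb hCb).aestronglyMeasurable, eLpNorm_conv_lt_top hQ hQm hb hbc hp⟩
  have hL : AEStronglyMeasurable (fun h => conv (Qker t) f h - conv (Qker (2 * t)) f h) volume :=
    ((continuous_conv hQ hf.continuous hC).sub (continuous_conv
      (integrable_Qker (t := 2 * t) (by positivity)) hf.continuous hC)).aestronglyMeasurable
  have hle := ENNReal.toReal_mono (by finiteness [hA.2.ne, hB.2.ne])
    (eLpNorm_Qker_sub_le ht (hf.differentiable (by simp)) ha hb hC hCa hCb hp)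
  have hAB := toReal_eLpNorm_add_le hp hA hB
  rw [ENNReal.toReal_mul, ENNReal.toReal_mul, ENNReal.toReal_ofReal (by positivity),
    ENNReal.toReal_ofNat, ← integral_rpow_eq_toReal hp hL] at hle
  set N := (∫ h : HR, (‖conv (Qker t) (da f) h‖ ^ p + ‖conv (Qker t) (db f) h‖ ^ p)) ^ (1 / p)
  have hN : 0 ≤ N := Real.rpow_nonneg (integral_nonneg fun h => by positivity) _
  calc _ ≤ √t * I * (2 * (2 * N)) := hle.trans (by gcongr)
    _ = 4 * I * √t * N := by ring
    _ ≤ (4 * I + 1) * √t * N := by gcongr; linarith
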